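/- arXiv:2602.05172 — 4 statements merged into one kernel-verified Lean document; each statement's English description precedes it below -/
import Mathlib

section
/- Assume k : ℝ^d × ℝ^d → ℝ is a symmetric kernel such that every Gram matrix (k(xⁱ,xʲ))_{i,j=1}^N is positive semidefinite and k together with all its partial derivatives up to order 2 is bounded in absolute value by B ∈ (0,∞). Assume V : ℝ^d → ℝ is differentiable with V(x) > 0 and ‖∇V(x)‖ ≤ A·V(x)^α for all x, where A > 0 and α ∈ [0,1/2]. Let ν ∈ (0,1] and x̲ = (x¹,…,x^N) ∈ (ℝ^d)^N. Then the R-SVGD vector field satisfies ‖𝖳_ν(x̲)‖² ≤ 2A²B²((1−ν)B+ν)⁻²·N·((1/N)Σ_{i=1}^N V(xⁱ))^{2α} + 2ν⁻²·N·d·B², where ‖·‖ is the Euclidean norm on (ℝ^d)^N ≅ ℝ^{dN}. -/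
noncomputable section

/-- Basis directions of `ℝ^d × ℝ^d`, used to express the partial derivatives of a kernel
`k : ℝ^d × ℝ^d → ℝ` with respect to each coordinate of each of its two arguments. -/
def pairBasis (d : ℕ) :
    (Fin d ⊕ Fin d) → EuclideanSpace ℝ (Fin d) × EuclideanSpace ℝ (Fin d) :=
  Sum.elim (fun i => (EuclideanSpace.single i 1, 0)) (fun i => (0, EuclideanSpace.single i 1))

/-- The R-SVGD vector field `𝖳_ν(x̲)`: its `i`-th block is
`Σ_l (((1−ν)K/N + ν I_N)⁻¹)_{i,l} · (1/N) Σ_j (k(x^l,x^j) ∇V(x^j) − ∇₂k(x^l,x^j))`,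
where `K = (k(x^a,x^b))_{a,b}` is the Gram matrix. -/
def steinField (d N : ℕ) (k : EuclideanSpace ℝ (Fin d) → EuclideanSpace ℝ (Fin d) → ℝ)
    (V : EuclideanSpace ℝ (Fin d) → ℝ) (ν : ℝ)
    (x : Fin N → EuclideanSpace ℝ (Fin d)) : Fin N → EuclideanSpace ℝ (Fin d) :=
  fun i => ∑ l : Fin N,
    ((((1 - ν) / (N : ℝ)) • Matrix.of (fun a b : Fin N => k (x a) (x b)) +
        ν • (1 : Matrix (Fin N) (Fin N) ℝ))⁻¹ i l) •
      ((N : ℝ)⁻¹ •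
        ∑ j : Fin N, (k (x l) (x j) • gradient V (x j) - gradient (k (x l)) (x j)))

/-!
With `P = K / N` and `M = (1 - ν) P + ν`, the vector field is `M⁻¹ P` applied to the tuple of
gradients of `V`, minus `M⁻¹` applied to the averaged kernel gradients. Since `0 ≤ P ≤ B`, the
matrix `M⁻¹` has operator norm at most `1 / ν`, and `M⁻¹ P` has operator norm at most the value at
`B` of the increasing function `t ↦ t / ((1 - ν) t + ν)`. The growth condition on `∇V` and Jensen's
inequality for the concave function `t ↦ t ^ (2 α)` then bound the first term; the bound on the
partial derivatives of `k` bounds the second.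
-/

lemma norm_sub_sq_le_two_mul {E : Type*} [SeminormedAddGroup E] (u v : E) :
    ‖u - v‖ ^ 2 ≤ 2 * (‖u‖ ^ 2 + ‖v‖ ^ 2) :=
  (pow_le_pow_left₀ (norm_nonneg _) (norm_sub_le u v) 2).trans add_sq_le

section PositiveOperator

open scoped RealInnerProductSpace

variable {E : Type*} [NormedAddCommGroup E] [InnerProductSpace ℝ E]

lemma norm_le_norm_add_of_inner_nonneg {u v : E} (h : 0 ≤ ⟪u, v⟫) : ‖u‖ ≤ ‖u + v‖ := by
  refine le_of_sq_le_sq ?_ (norm_nonneg _)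
  rw [norm_add_sq_real]
  linarith [sq_nonneg ‖v‖]

variable {T : E →L[ℝ] E}

lemma sq_inner_apply_le_of_isPositive (hT : T.IsPositive) (u v : E) :
    ⟪T u, v⟫ ^ 2 ≤ ⟪T u, u⟫ * ⟪T v, v⟫ :=
  LinearMap.BilinForm.apply_sq_le_of_symm (innerₗ E ∘ₗ T.toLinearMap)
    hT.inner_nonneg_left ⟨fun u v => by
      simpa [real_inner_comm] using hT.inner_left_eq_inner_right u v⟩ u v

lemma norm_apply_sq_le_of_isPositive (hT : T.IsPositive) (u : E) :
    ‖T u‖ ^ 2 ≤ ‖T‖ * ⟪T u, u⟫ := by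
  rcases (norm_nonneg (T u)).eq_or_lt with hTu | hTu
  · rw [← hTu]
    simpa using mul_nonneg (norm_nonneg T) (hT.inner_nonneg_left u)
  refine le_of_mul_le_mul_right ?_ (pow_pos hTu 2)
  calc ‖T u‖ ^ 2 * ‖T u‖ ^ 2 = ⟪T u, T u⟫ ^ 2 := by rw [real_inner_self_eq_norm_sq]; ring
    _ ≤ ⟪T u, u⟫ * ⟪T (T u), T u⟫ := sq_inner_apply_le_of_isPositive hT u (T u)
    _ ≤ ⟪T u, u⟫ * (‖T‖ * ‖T u‖ * ‖T u‖) := by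
        gcongr
        · exact hT.inner_nonneg_left u
        · exact (real_inner_le_norm _ _).trans (by gcongr; exact T.le_opNorm _)
    _ = ‖T‖ * ⟪T u, u⟫ * ‖T u‖ ^ 2 := by ring

variable {a b : ℝ}

lemma mul_norm_le_norm_smul_apply_add_smul (hT : T.IsPositive) (ha : 0 ≤ a) (hb : 0 ≤ b) (u : E) :
    b * ‖u‖ ≤ ‖a • T u + b • u‖ := by
  have h_inner : 0 ≤ ⟪b • u, a • T u⟫ := by
    rw [real_inner_smul_left, real_inner_smul_right]
    have := hT.inner_nonneg_right u
    positivity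
  simpa [norm_smul, abs_of_nonneg hb, add_comm] using norm_le_norm_add_of_inner_nonneg h_inner

lemma mul_norm_apply_le_mul_norm_smul_apply_add_smul {B : ℝ} (hT : T.IsPositive) (hTB : ‖T‖ ≤ B)
    (ha : 0 ≤ a) (hb : 0 ≤ b) (u : E) :
    (a * B + b) * ‖T u‖ ≤ B * ‖a • T u + b • u‖ := by
  -- `B (a T + b) = (a B + b) T + b (B - T)`, where `T` and `B - T` are commuting positive operators
  -- and so map `u` to vectors with nonnegative inner product.
  have hB : 0 ≤ B := (norm_nonneg T).trans hTB
  have h_inner : 0 ≤ ⟪T u, B • u - T u⟫ := by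
    rw [inner_sub_right, real_inner_smul_right, real_inner_self_eq_norm_sq, sub_nonneg]
    exact (norm_apply_sq_le_of_isPositive hT u).trans
      (mul_le_mul_of_nonneg_right hTB (hT.inner_nonneg_left u))
  have h_inner' : 0 ≤ ⟪(a * B + b) • T u, b • (B • u - T u)⟫ := by
    rw [real_inner_smul_left, real_inner_smul_right]
    positivity
  calc (a * B + b) * ‖T u‖ = ‖(a * B + b) • T u‖ := by
        rw [norm_smul, Real.norm_of_nonneg (by positivity)]
    _ ≤ ‖(a * B + b) • T u + b • (B • u - T u)‖ := norm_le_norm_add_of_inner_nonneg h_inner'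
    _ = ‖B • (a • T u + b • u)‖ := by congr 1; module
    _ = B * ‖a • T u + b • u‖ := by rw [norm_smul, Real.norm_of_nonneg hB]

end PositiveOperator

section MatrixNorm

open Matrix WithLp
open scoped Matrix.Norms.L2Operator

variable {𝕜 m n ι : Type*} [RCLike 𝕜] [Fintype m] [Fintype n] [DecidableEq n] [Fintype ι]

lemma norm_toLp_mulVec_le_l2_opNorm (A : Matrix m n 𝕜) (v : n → 𝕜) :
    ‖toLp 2 (A *ᵥ v)‖ ≤ ‖A‖ * ‖toLp 2 v‖ :=
  l2_opNorm_mulVec A (toLp 2 v)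

lemma l2_opNorm_le_of_norm_toLp_mulVec_le {A : Matrix m n 𝕜} {C : ℝ} (hC : 0 ≤ C)
    (h : ∀ v, ‖toLp 2 (A *ᵥ v)‖ ≤ C * ‖toLp 2 v‖) : ‖A‖ ≤ C :=
  ContinuousLinearMap.opNorm_le_bound _ hC fun v => h (ofLp v)

lemma sum_norm_sum_smul_sq_le (A : Matrix m n 𝕜) (w : n → EuclideanSpace 𝕜 ι) :
    ∑ i, ‖∑ l, A i l • w l‖ ^ 2 ≤ ‖A‖ ^ 2 * ∑ l, ‖w l‖ ^ 2 := by
  have h_coord (c : ι) : ∑ i, ‖(A *ᵥ fun l => w l c) i‖ ^ 2 ≤ ‖A‖ ^ 2 * ∑ l, ‖w l c‖ ^ 2 := by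
    have := pow_le_pow_left₀ (norm_nonneg _)
      (norm_toLp_mulVec_le_l2_opNorm A fun l => w l c) 2
    simpa only [mul_pow, EuclideanSpace.norm_sq_eq] using this
  calc ∑ i, ‖∑ l, A i l • w l‖ ^ 2 = ∑ c, ∑ i, ‖(A *ᵥ fun l => w l c) i‖ ^ 2 := by
        rw [Finset.sum_comm]
        simp [EuclideanSpace.norm_sq_eq, mulVec, dotProduct]
    _ ≤ ∑ c, ‖A‖ ^ 2 * ∑ l, ‖w l c‖ ^ 2 := Finset.sum_le_sum fun c _ => h_coord c
    _ = ‖A‖ ^ 2 * ∑ l, ‖w l‖ ^ 2 := by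
        rw [← Finset.mul_sum, Finset.sum_comm]
        simp only [EuclideanSpace.norm_sq_eq]

lemma norm_le_sqrt_card_mul {v : EuclideanSpace 𝕜 ι} {C : ℝ} (hC : 0 ≤ C) (h : ∀ i, ‖v i‖ ≤ C) :
    ‖v‖ ≤ √(Fintype.card ι) * C := by
  refine le_of_sq_le_sq ?_ (by positivity)
  calc ‖v‖ ^ 2 = ∑ i, ‖v i‖ ^ 2 := EuclideanSpace.norm_sq_eq v
    _ ≤ ∑ _i : ι, C ^ 2 := Finset.sum_le_sum fun i _ => by gcongr; exact h i
    _ = (√(Fintype.card ι) * C) ^ 2 := by simp [mul_pow]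

lemma sum_norm_le_sqrt_card_mul_norm (v : EuclideanSpace 𝕜 ι) :
    ∑ i, ‖v i‖ ≤ √(Fintype.card ι) * ‖v‖ := by
  refine le_of_sq_le_sq ?_ (by positivity)
  rw [mul_pow, Real.sq_sqrt (Nat.cast_nonneg _), EuclideanSpace.norm_sq_eq]
  exact sq_sum_le_card_mul_sum_sq

lemma l2_opNorm_le_of_norm_entry_le {A : Matrix m n 𝕜} {C : ℝ} (hC : 0 ≤ C)
    (h : ∀ i j, ‖A i j‖ ≤ C) :
    ‖A‖ ≤ √(Fintype.card m) * √(Fintype.card n) * C := by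
  refine l2_opNorm_le_of_norm_toLp_mulVec_le (by positivity) fun v => ?_
  have h_row (i : m) : ‖(A *ᵥ v) i‖ ≤ C * (√(Fintype.card n) * ‖toLp 2 v‖) :=
    calc ‖(A *ᵥ v) i‖ ≤ ∑ j, ‖A i j * v j‖ := norm_sum_le _ _
      _ ≤ ∑ j, C * ‖v j‖ := Finset.sum_le_sum fun j _ => by
          rw [norm_mul]; gcongr; exact h i j
      _ = C * ∑ j, ‖v j‖ := (Finset.mul_sum ..).symm
      _ ≤ C * (√(Fintype.card n) * ‖toLp 2 v‖) := by
          gcongr; exact sum_norm_le_sqrt_card_mul_norm (toLp 2 v)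
  calc ‖toLp 2 (A *ᵥ v)‖ ≤ √(Fintype.card m) * (C * (√(Fintype.card n) * ‖toLp 2 v‖)) :=
        norm_le_sqrt_card_mul (by positivity) h_row
    _ = √(Fintype.card m) * √(Fintype.card n) * C * ‖toLp 2 v‖ := by ring

variable {P : Matrix n n ℝ} {a b B : ℝ}

lemma isPositive_toEuclideanCLM (hP : P.PosSemidef) : (toEuclideanCLM (𝕜 := ℝ) P).IsPositive :=
  isPositive_toEuclideanLin_iff.2 hP

lemma mul_norm_toLp_le_norm_toLp_mulVec (hP : P.PosSemidef) (ha : 0 ≤ a) (hb : 0 ≤ b)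
    (v : n → ℝ) : b * ‖toLp 2 v‖ ≤ ‖toLp 2 ((a • P + b • (1 : Matrix n n ℝ)) *ᵥ v)‖ := by
  simpa [add_mulVec, smul_mulVec, toLp_add] using
    mul_norm_le_norm_smul_apply_add_smul (isPositive_toEuclideanCLM hP) ha hb (toLp 2 v)

lemma mul_norm_toLp_mulVec_le_mul_norm_toLp_mulVec (hP : P.PosSemidef) (hPB : ‖P‖ ≤ B)
    (ha : 0 ≤ a) (hb : 0 ≤ b) (v : n → ℝ) :
    (a * B + b) * ‖toLp 2 (P *ᵥ v)‖ ≤ B * ‖toLp 2 ((a • P + b • (1 : Matrix n n ℝ)) *ᵥ v)‖ := by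
  simpa [add_mulVec, smul_mulVec, toLp_add] using
    mul_norm_apply_le_mul_norm_smul_apply_add_smul (isPositive_toEuclideanCLM hP) hPB ha hb
      (toLp 2 v)

lemma mulVec_inv_mulVec_smul_add_smul_one (hP : P.PosSemidef) (ha : 0 ≤ a) (hb : 0 < b)
    (v : n → ℝ) :
    (a • P + b • (1 : Matrix n n ℝ)) *ᵥ ((a • P + b • (1 : Matrix n n ℝ))⁻¹ *ᵥ v) = v := by
  have h_posDef : (a • P + b • (1 : Matrix n n ℝ)).PosDef :=
    PosDef.posSemidef_add (hP.smul ha) (PosDef.one.smul hb)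
  rw [mulVec_mulVec, mul_nonsing_inv _ ((isUnit_iff_isUnit_det _).1 h_posDef.isUnit), one_mulVec]

lemma commute_inv_smul_add_smul_one (P : Matrix n n ℝ) (a b : ℝ) :
    Commute (a • P + b • (1 : Matrix n n ℝ))⁻¹ P := by
  have h_comm : Commute P (a • P + b • (1 : Matrix n n ℝ)) :=
    ((Commute.refl P).smul_right a).add_right ((Commute.one_right P).smul_right b)
  simpa using (Matrix.Commute.zpow_right h_comm (-1)).symm

lemma l2_opNorm_inv_smul_add_smul_one_le (hP : P.PosSemidef) (ha : 0 ≤ a) (hb : 0 < b) :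
    ‖(a • P + b • (1 : Matrix n n ℝ))⁻¹‖ ≤ b⁻¹ := by
  refine l2_opNorm_le_of_norm_toLp_mulVec_le (by positivity) fun v => ?_
  rw [le_inv_mul_iff₀ hb]
  refine (mul_norm_toLp_le_norm_toLp_mulVec hP ha hb.le _).trans_eq ?_
  rw [mulVec_inv_mulVec_smul_add_smul_one hP ha hb]

lemma l2_opNorm_inv_smul_add_smul_one_mul_le (hP : P.PosSemidef) (hPB : ‖P‖ ≤ B) (ha : 0 ≤ a)
    (hb : 0 < b) : ‖(a • P + b • (1 : Matrix n n ℝ))⁻¹ * P‖ ≤ B / (a * B + b) := by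
  have hB : 0 ≤ B := (norm_nonneg P).trans hPB
  refine l2_opNorm_le_of_norm_toLp_mulVec_le (by positivity) fun v => ?_
  rw [div_mul_eq_mul_div, le_div_iff₀' (by positivity), (commute_inv_smul_add_smul_one P a b).eq,
    ← mulVec_mulVec]
  refine (mul_norm_toLp_mulVec_le_mul_norm_toLp_mulVec hP hPB ha hb.le _).trans_eq ?_
  rw [mulVec_inv_mulVec_smul_add_smul_one hP ha hb]

end MatrixNorm

section Averages

lemma norm_inv_card_smul_sum_le {E ι : Type*} [SeminormedAddCommGroup E] [NormedSpace ℝ E]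
    (s : Finset ι) {f : ι → E} {C : ℝ} (hC : 0 ≤ C) (hf : ∀ i ∈ s, ‖f i‖ ≤ C) :
    ‖(s.card : ℝ)⁻¹ • ∑ i ∈ s, f i‖ ≤ C := by
  rw [norm_smul, norm_inv, RCLike.norm_natCast]
  refine inv_mul_le_of_le_mul₀ (Nat.cast_nonneg _) hC ?_
  simpa using norm_sum_le_of_le s hf

lemma sum_rpow_le_card_mul_rpow {ι : Type*} (s : Finset ι) {f : ι → ℝ} (hf : ∀ i ∈ s, 0 ≤ f i)
    {p : ℝ} (hp₀ : 0 ≤ p) (hp₁ : p ≤ 1) :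
    ∑ i ∈ s, f i ^ p ≤ s.card * ((s.card : ℝ)⁻¹ * ∑ i ∈ s, f i) ^ p := by
  rcases s.eq_empty_or_nonempty with rfl | hs
  · simp
  have h_card : (0 : ℝ) < s.card := by exact_mod_cast hs.card_pos
  have h_jensen := (Real.concaveOn_rpow hp₀ hp₁).le_map_sum (t := s)
    (w := fun _ => (s.card : ℝ)⁻¹) (p := f) (fun _ _ => by positivity)
    (by simp [h_card.ne']) hf
  simpa only [smul_eq_mul, ← Finset.mul_sum, inv_mul_le_iff₀ h_card] using h_jensen

lemma sum_sq_le_of_le_mul_rpow {ι : Type*} (s : Finset ι) {f g : ι → ℝ} {A α : ℝ}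
    (hf : ∀ i ∈ s, 0 ≤ f i) (hg : ∀ i ∈ s, 0 ≤ g i) (hα₀ : 0 ≤ α) (hα₁ : α ≤ 1 / 2)
    (h : ∀ i ∈ s, g i ≤ A * f i ^ α) :
    ∑ i ∈ s, g i ^ 2 ≤ A ^ 2 * (s.card * ((s.card : ℝ)⁻¹ * ∑ i ∈ s, f i) ^ (2 * α)) :=
  calc ∑ i ∈ s, g i ^ 2 ≤ ∑ i ∈ s, A ^ 2 * f i ^ (2 * α) := Finset.sum_le_sum fun i hi => by
        rw [mul_comm 2 α, Real.rpow_mul (hf i hi), Real.rpow_two, ← mul_pow]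
        exact pow_le_pow_left₀ (hg i hi) (h i hi) 2
    _ = A ^ 2 * ∑ i ∈ s, f i ^ (2 * α) := (Finset.mul_sum ..).symm
    _ ≤ A ^ 2 * (s.card * ((s.card : ℝ)⁻¹ * ∑ i ∈ s, f i) ^ (2 * α)) := by
        gcongr
        exact sum_rpow_le_card_mul_rpow s hf (by linarith) (by linarith)

lemma norm_inv_card_smul_sum_sq_le {ι κ : Type*} [Fintype κ] (s : Finset ι)
    {f : ι → EuclideanSpace ℝ κ} {C : ℝ} (hC : 0 ≤ C) (hf : ∀ i ∈ s, ∀ c, |f i c| ≤ C) :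
    ‖(s.card : ℝ)⁻¹ • ∑ i ∈ s, f i‖ ^ 2 ≤ Fintype.card κ * C ^ 2 := by
  have h_mean : ‖(s.card : ℝ)⁻¹ • ∑ i ∈ s, f i‖ ≤ √(Fintype.card κ) * C :=
    norm_inv_card_smul_sum_le s (by positivity) fun i hi =>
      norm_le_sqrt_card_mul (v := f i) hC (hf i hi)
  simpa [mul_pow] using pow_le_pow_left₀ (norm_nonneg _) h_mean 2

end Averages

section Kernel

open scoped Matrix.Norms.L2Operator

/-- The matrix `K / N`, where `K` is the Gram matrix of the kernel `k` at the points `x`. -/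
def normalizedGram {X : Type*} {N : ℕ} (k : X → X → ℝ) (x : Fin N → X) :
    Matrix (Fin N) (Fin N) ℝ :=
  (N : ℝ)⁻¹ • Matrix.of fun a b => k (x a) (x b)

/-- The matrix `(1 - ν) K / N + ν I` whose inverse preconditions the R-SVGD vector field. -/
def regularizedGram {X : Type*} {N : ℕ} (k : X → X → ℝ) (ν : ℝ) (x : Fin N → X) :
    Matrix (Fin N) (Fin N) ℝ :=
  (1 - ν) • normalizedGram k x + ν • 1

lemma l2_opNorm_normalizedGram_le {X : Type*} {N : ℕ} {k : X → X → ℝ} {x : Fin N → X} {B : ℝ}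
    (hB : 0 ≤ B) (hk : ∀ i j, |k (x i) (x j)| ≤ B) : ‖normalizedGram k x‖ ≤ B := by
  rw [normalizedGram, norm_smul, norm_inv, RCLike.norm_natCast]
  refine inv_mul_le_of_le_mul₀ (Nat.cast_nonneg _) hB ?_
  simpa using l2_opNorm_le_of_norm_entry_le (A := Matrix.of fun a b => k (x a) (x b)) hB hk

variable {d N : ℕ} {k : EuclideanSpace ℝ (Fin d) → EuclideanSpace ℝ (Fin d) → ℝ}
  {V : EuclideanSpace ℝ (Fin d) → ℝ} {x : Fin N → EuclideanSpace ℝ (Fin d)} {B ν : ℝ}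

lemma hasGradientAt_right_of_differentiableAt {y z : EuclideanSpace ℝ (Fin d)}
    (hk : DifferentiableAt ℝ (fun p : EuclideanSpace ℝ (Fin d) × EuclideanSpace ℝ (Fin d) =>
      k p.1 p.2) (y, z)) : HasGradientAt (k y) (gradient (k y) z) z :=
  (hk.comp z (hasFDerivAt_prodMk_right (𝕜 := ℝ) y z).differentiableAt).hasGradientAt

lemma gradient_apply_eq_fderiv_pairBasis {y z : EuclideanSpace ℝ (Fin d)}
    (hk : DifferentiableAt ℝ (fun p : EuclideanSpace ℝ (Fin d) × EuclideanSpace ℝ (Fin d) =>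
      k p.1 p.2) (y, z)) (c : Fin d) :
    gradient (k y) z c =
      fderiv ℝ (fun p : EuclideanSpace ℝ (Fin d) × EuclideanSpace ℝ (Fin d) => k p.1 p.2) (y, z)
        (pairBasis d (Sum.inr c)) := by
  have h_chain : HasFDerivAt (k y) _ z :=
    hk.hasFDerivAt.comp z (hasFDerivAt_prodMk_right (𝕜 := ℝ) y z)
  have h_coord : gradient (k y) z c = fderiv ℝ (k y) z (EuclideanSpace.single c 1) := by
    rw [← inner_gradient_left, EuclideanSpace.inner_single_right]
    simp
  rw [h_coord, h_chain.fderiv]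
  simp [pairBasis]

lemma steinField_eq_sub (i : Fin N) :
    steinField d N k V ν x i =
      ∑ l, ((regularizedGram k ν x)⁻¹ * normalizedGram k x) i l • gradient V (x l) -
        ∑ l, (regularizedGram k ν x)⁻¹ i l • ((N : ℝ)⁻¹ • ∑ j, gradient (k (x l)) (x j)) := by
  have h_reg : ((1 - ν) / (N : ℝ)) • Matrix.of (fun a b => k (x a) (x b)) + ν • 1 =
      regularizedGram k ν x := by
    rw [regularizedGram, normalizedGram, smul_smul, div_eq_mul_inv]
  have h_drift : ∑ l, (regularizedGram k ν x)⁻¹ i l •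
      ∑ j, normalizedGram k x l j • gradient V (x j) =
      ∑ l, ((regularizedGram k ν x)⁻¹ * normalizedGram k x) i l • gradient V (x l) := by
    simp only [Matrix.mul_apply, Finset.sum_smul, Finset.smul_sum, smul_smul]
    exact Finset.sum_comm
  rw [← h_drift, ← Finset.sum_sub_distrib, steinField, h_reg]
  simp only [normalizedGram, Finset.sum_sub_distrib, smul_sub, Finset.smul_sum, smul_smul,
    Matrix.smul_apply, Matrix.of_apply, smul_eq_mul]

lemma sum_norm_steinField_sq_le
    (hgram : (Matrix.of fun a b => k (x a) (x b)).PosSemidef) (hB : 0 ≤ B)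
    (hk : ∀ i j, |k (x i) (x j)| ≤ B) (hν : ν ∈ Set.Ioc (0 : ℝ) 1) :
    ∑ i, ‖steinField d N k V ν x i‖ ^ 2 ≤
      2 * ((B / ((1 - ν) * B + ν)) ^ 2 * ∑ j, ‖gradient V (x j)‖ ^ 2) +
        2 * (ν⁻¹ ^ 2 * ∑ l, ‖(N : ℝ)⁻¹ • ∑ j, gradient (k (x l)) (x j)‖ ^ 2) := by
  have hP : (normalizedGram k x).PosSemidef := hgram.smul (by positivity)
  have hν' : 0 ≤ 1 - ν := sub_nonneg.2 hν.2
  have h_drift := l2_opNorm_inv_smul_add_smul_one_mul_le hP (l2_opNorm_normalizedGram_le hB hk)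
    hν' hν.1
  have h_repulsion := l2_opNorm_inv_smul_add_smul_one_le hP hν' hν.1
  simp only [steinField_eq_sub]
  refine (Finset.sum_le_sum fun i _ => norm_sub_sq_le_two_mul _ _).trans ?_
  rw [← Finset.mul_sum, Finset.sum_add_distrib, mul_add]
  gcongr
  · exact (sum_norm_sum_smul_sq_le _ _).trans (by gcongr; exact h_drift)
  · exact (sum_norm_sum_smul_sq_le _ _).trans (by gcongr; exact h_repulsion)

end Kernel

theorem statement_11_general {d N : ℕ}
    {k : EuclideanSpace ℝ (Fin d) → EuclideanSpace ℝ (Fin d) → ℝ}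
    {V : EuclideanSpace ℝ (Fin d) → ℝ} {B A α ν : ℝ} {x : Fin N → EuclideanSpace ℝ (Fin d)}
    {k₂' : Fin N → Fin N → EuclideanSpace ℝ (Fin d)} {V' : Fin N → EuclideanSpace ℝ (Fin d)}
    (hB : 0 ≤ B)
    (hgram : (Matrix.of fun a b => k (x a) (x b)).PosSemidef)
    (hk₀ : ∀ i j, |k (x i) (x j)| ≤ B)
    (hk : ∀ i j, HasGradientAt (k (x i)) (k₂' i j) (x j))
    (hk₁ : ∀ i j c, |k₂' i j c| ≤ B)
    (hV₀ : ∀ j, 0 ≤ V (x j))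
    (hα : α ∈ Set.Icc (0 : ℝ) (1 / 2))
    (hV : ∀ j, HasGradientAt V (V' j) (x j))
    (hV₁ : ∀ j, ‖V' j‖ ≤ A * V (x j) ^ α)
    (hν : ν ∈ Set.Ioc (0 : ℝ) 1) :
    ∑ i, ‖steinField d N k V ν x i‖ ^ 2 ≤
      2 * A ^ 2 * B ^ 2 / ((1 - ν) * B + ν) ^ 2 * N *
          (((N : ℝ)⁻¹ * ∑ i, V (x i)) ^ (2 * α)) +
        2 * (N : ℝ) * d * B ^ 2 / ν ^ 2 := by
  have h_drift : ∑ j, ‖V' j‖ ^ 2 ≤ A ^ 2 * (N * ((N : ℝ)⁻¹ * ∑ i, V (x i)) ^ (2 * α)) := by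
    simpa using sum_sq_le_of_le_mul_rpow Finset.univ (fun j _ => hV₀ j)
      (fun j _ => norm_nonneg (V' j)) hα.1 hα.2 fun j _ => hV₁ j
  have h_repulsion : ∑ l, ‖(N : ℝ)⁻¹ • ∑ j, k₂' l j‖ ^ 2 ≤ N * (d * B ^ 2) := by
    simpa using Finset.sum_le_card_nsmul Finset.univ _ _ fun l _ =>
      norm_inv_card_smul_sum_sq_le Finset.univ hB fun j _ => hk₁ l j
  calc ∑ i, ‖steinField d N k V ν x i‖ ^ 2
      ≤ 2 * ((B / ((1 - ν) * B + ν)) ^ 2 * ∑ j, ‖V' j‖ ^ 2) +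
          2 * (ν⁻¹ ^ 2 * ∑ l, ‖(N : ℝ)⁻¹ • ∑ j, k₂' l j‖ ^ 2) := by
        simpa only [(hk _ _).gradient, (hV _).gradient] using
          sum_norm_steinField_sq_le (V := V) hgram hB hk₀ hν
    _ ≤ 2 * ((B / ((1 - ν) * B + ν)) ^ 2 *
            (A ^ 2 * (N * ((N : ℝ)⁻¹ * ∑ i, V (x i)) ^ (2 * α)))) +
          2 * (ν⁻¹ ^ 2 * (N * (d * B ^ 2))) := by gcongr
    _ = _ := by rw [div_pow, inv_pow]; ring

/-- Norm bound on the R-SVGD vector field: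
`‖𝖳_ν(x̲)‖² ≤ 2A²B²((1−ν)B+ν)⁻²·N·((1/N)Σᵢ V(xⁱ))^{2α} + 2ν⁻²·N·d·B²`. -/
theorem statement_11 {d N : ℕ}
    (k : EuclideanSpace ℝ (Fin d) → EuclideanSpace ℝ (Fin d) → ℝ)
    (V : EuclideanSpace ℝ (Fin d) → ℝ) (B A α ν : ℝ)
    (hB : 0 < B)
    (hksymm : ∀ x y, k x y = k y x)
    (hgram : ∀ (m : ℕ) (y : Fin m → EuclideanSpace ℝ (Fin d)),
      (Matrix.of fun a b : Fin m => k (y a) (y b)).PosSemidef)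
    (hkC2 : ContDiff ℝ 2 (fun p : EuclideanSpace ℝ (Fin d) × EuclideanSpace ℝ (Fin d) =>
      k p.1 p.2))
    (hk0 : ∀ x y, |k x y| ≤ B)
    (hk1 : ∀ (p : EuclideanSpace ℝ (Fin d) × EuclideanSpace ℝ (Fin d)) (v : Fin d ⊕ Fin d),
      |fderiv ℝ (fun q : EuclideanSpace ℝ (Fin d) × EuclideanSpace ℝ (Fin d) => k q.1 q.2) p
        (pairBasis d v)| ≤ B)
    (hk2 : ∀ (p : EuclideanSpace ℝ (Fin d) × EuclideanSpace ℝ (Fin d)) (v w : Fin d ⊕ Fin d),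
      |fderiv ℝ (fun q : EuclideanSpace ℝ (Fin d) × EuclideanSpace ℝ (Fin d) =>
          fderiv ℝ (fun r : EuclideanSpace ℝ (Fin d) × EuclideanSpace ℝ (Fin d) => k r.1 r.2) q
            (pairBasis d v)) p (pairBasis d w)| ≤ B)
    (hVdiff : Differentiable ℝ V)
    (hVpos : ∀ x, 0 < V x)
    (hA : 0 < A) (hα : α ∈ Set.Icc (0 : ℝ) (1 / 2))
    (hVgrad : ∀ x, ‖gradient V x‖ ≤ A * V x ^ α)
    (hν : ν ∈ Set.Ioc (0 : ℝ) 1)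
    (x : Fin N → EuclideanSpace ℝ (Fin d)) :
    ∑ i : Fin N, ‖steinField d N k V ν x i‖ ^ 2 ≤
      2 * A ^ 2 * B ^ 2 / ((1 - ν) * B + ν) ^ 2 * N *
          (((N : ℝ)⁻¹ * ∑ i : Fin N, V (x i)) ^ (2 * α)) +
        2 * (N : ℝ) * d * B ^ 2 / ν ^ 2 := by
  have hk (y z) := hkC2.differentiable two_ne_zero (y, z)
  exact statement_11_general hB.le (hgram N x) (fun _ _ => hk0 _ _)
    (fun _ _ => hasGradientAt_right_of_differentiableAt (hk _ _))
    (fun _ _ c => gradient_apply_eq_fderiv_pairBasis (hk _ _) c ▸ hk1 _ _)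
    (fun _ => (hVpos _).le) hα (fun _ => (hVdiff _).hasGradientAt) (fun _ => hVgrad _) hν

end
end

section
/- Assume k : ℝ^d × ℝ^d → ℝ is a symmetric kernel such that every Gram matrix (k(xⁱ,xʲ))_{i,j=1}^N is positive semidefinite and k together with all its partial derivatives up to order 2 is bounded in absolute value by B ∈ (0,∞). Assume V : ℝ^d → ℝ is twice continuously differentiable with ‖∇²V(x)‖_op ≤ C_V for all x, V(x) > 0 for all x, and ‖∇V(x)‖ ≤ A·V(x)^α for all x, where A > 0 and α ∈ [0,1/2]. Let ν ∈ (0,1], h > 0 with h ≤ ν/B, and set η = B·h/ν ≤ 1. For a configuration x̲ = (x¹,…,x^N) ∈ (ℝ^d)^N, write f(x̲) = (1/N)Σ_{i=1}^N V(xⁱ) and let x̲′ = x̲ − h·𝖳_ν(x̲) be the one-step R-SVGD update. Then f(x̲′) ≤ (1 + C_V·A²·η²)·f(x̲) + A·√d·η·f(x̲)^α + C_V·(A² + d)·η². -/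
noncomputable section

/-!
Write `W = ((1 - ν) K / N + ν I)⁻¹` and `u = (1/N) Σⱼ ∇₂k(·, xʲ)`, so that the R-SVGD field is
`W (K ∇V / N - u)`. The descent lemma for a `C_V`-smooth potential bounds the change of the mean
potential by `-h 𝔼 ⟪∇V, 𝖳⟫ + (C_V / 2) h² 𝔼 ‖𝖳‖²`. Since `W` is a function of the positive
semidefinite matrix `K`, `W K` is positive semidefinite, so the attraction term can only decrease
the potential to first order and just the repulsion `W u` remains; and `W` has operator norm at most
`1 / ν`. Both terms are thus controlled by `𝔼 ‖∇V‖²`, which by the growth condition and Jensen's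
inequality for the concave function `t ↦ t ^ (2 α)` is at most `A² f ^ (2 α) ≤ A² (1 + f)`.
-/

open scoped BigOperators Gradient NNReal RealInnerProductSpace Matrix

section RegularizedInverse

open scoped Matrix.Module

variable {ι : Type*} [DecidableEq ι] {K : Matrix ι ι ℝ} {a ν : ℝ}

lemma posDef_smul_add_smul_one (hK : K.PosSemidef) (ha : 0 ≤ a) (hν : 0 < ν) :
    (a • K + ν • (1 : Matrix ι ι ℝ)).PosDef :=
  Matrix.PosDef.posSemidef_add (hK.smul ha) (Matrix.PosDef.one.smul hν)

variable [Fintype ι]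

/-- The regularized inverse `(a K + ν I)⁻¹` of a square matrix `K`, which R-SVGD applies to the
SVGD direction. It is a genuine inverse for `K` positive semidefinite, `0 ≤ a` and `0 < ν`. -/
def regularizedInverse (K : Matrix ι ι ℝ) (a ν : ℝ) : Matrix ι ι ℝ :=
  (a • K + ν • (1 : Matrix ι ι ℝ))⁻¹

lemma regularizedInverse_isHermitian (hK : K.PosSemidef) (ha : 0 ≤ a) (hν : 0 < ν) :
    (regularizedInverse K a ν).IsHermitian :=
  (posDef_smul_add_smul_one hK ha hν).isHermitian.inv

lemma smul_add_smul_one_mul_regularizedInverse (hK : K.PosSemidef) (ha : 0 ≤ a) (hν : 0 < ν) :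
    (a • K + ν • (1 : Matrix ι ι ℝ)) * regularizedInverse K a ν = 1 :=
  Matrix.mul_nonsing_inv _ (posDef_smul_add_smul_one hK ha hν).det_pos.ne'.isUnit

lemma regularizedInverse_mul_smul_add_smul_one (hK : K.PosSemidef) (ha : 0 ≤ a) (hν : 0 < ν) :
    regularizedInverse K a ν * (a • K + ν • (1 : Matrix ι ι ℝ)) = 1 :=
  Matrix.nonsing_inv_mul _ (posDef_smul_add_smul_one hK ha hν).det_pos.ne'.isUnit

lemma posSemidef_regularizedInverse_mul (hK : K.PosSemidef) (ha : 0 ≤ a) (hν : 0 < ν) :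
    (regularizedInverse K a ν * K).PosSemidef := by
  set W := regularizedInverse K a ν
  have congruence : W * K = Wᴴ * (a • K ^ 2 + ν • K) * W := by
    have hKM : a • K ^ 2 + ν • K = K * (a • K + ν • 1) := by simp [mul_add, sq]
    rw [regularizedInverse_isHermitian hK ha hν, hKM, mul_assoc, mul_assoc,
      smul_add_smul_one_mul_regularizedInverse hK ha hν, mul_one]
  rw [congruence]
  exact (((hK.pow 2).smul ha).add (hK.smul hν.le)).conjTranspose_mul_mul_same W

lemma posSemidef_one_sub_sq_smul_regularizedInverse_sq (hK : K.PosSemidef) (ha : 0 ≤ a)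
    (hν : 0 < ν) : (1 - ν ^ 2 • regularizedInverse K a ν ^ 2).PosSemidef := by
  set W := regularizedInverse K a ν
  set M := a • K + ν • (1 : Matrix ι ι ℝ) with hM
  have congruence : 1 - ν ^ 2 • W ^ 2 = Wᴴ * (a ^ 2 • K ^ 2 + (2 * a * ν) • K) * W := by
    have hMsq : a ^ 2 • K ^ 2 + (2 * a * ν) • K = M * M - ν ^ 2 • 1 := by
      simp only [hM, mul_add, add_mul, smul_mul_smul_comm, mul_one, one_mul, sq]
      module
    have hWM : W * M = 1 := regularizedInverse_mul_smul_add_smul_one hK ha hν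
    have hMW : M * W = 1 := smul_add_smul_one_mul_regularizedInverse hK ha hν
    calc 1 - ν ^ 2 • W ^ 2 = (W * M) * (M * W) - ν ^ 2 • W ^ 2 := by rw [hWM, hMW, one_mul]
      _ = W * (M * M - ν ^ 2 • 1) * W := by simp [mul_sub, sub_mul, sq, mul_assoc]
      _ = Wᴴ * (a ^ 2 • K ^ 2 + (2 * a * ν) • K) * W := by
        rw [hMsq, regularizedInverse_isHermitian hK ha hν]
  rw [congruence]
  exact (((hK.pow 2).smul (by positivity)).add
    (hK.smul (by positivity))).conjTranspose_mul_mul_same W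

variable {E : Type*} [NormedAddCommGroup E] [InnerProductSpace ℝ E]

lemma sum_inner_transpose_smul (M : Matrix ι ι ℝ) (f g : ι → E) :
    ∑ i, ⟪f i, (Mᵀ • g) i⟫ = ∑ i, ⟪(M • f) i, g i⟫ := by
  simp only [Matrix.Module.smul_apply, inner_sum, sum_inner, real_inner_smul_left,
    real_inner_smul_right, Matrix.transpose_apply]
  exact Finset.sum_comm

lemma sum_inner_smul_nonneg {M : Matrix ι ι ℝ} (hM : M.PosSemidef) (g : ι → E) :
    0 ≤ ∑ i, ⟪g i, (M • g) i⟫ := by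
  obtain ⟨R, rfl⟩ : ∃ R : Matrix ι ι ℝ, M = Rᴴ * R := by
    open scoped MatrixOrder in
    exact CStarAlgebra.nonneg_iff_eq_star_mul_self.mp hM.nonneg
  rw [Matrix.conjTranspose_eq_transpose_of_trivial, mul_smul, sum_inner_transpose_smul]
  exact Finset.sum_nonneg fun i _ ↦ real_inner_self_nonneg

lemma sq_mul_sum_norm_sq_regularizedInverse_smul_le (hK : K.PosSemidef) (ha : 0 ≤ a) (hν : 0 < ν)
    (g : ι → E) :
    ν ^ 2 * ∑ i, ‖(regularizedInverse K a ν • g) i‖ ^ 2 ≤ ∑ i, ‖g i‖ ^ 2 := by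
  set W := regularizedInverse K a ν
  have hW : Wᵀ = W := regularizedInverse_isHermitian hK ha hν
  have norm_sq_smul : ∑ i, ‖(W • g) i‖ ^ 2 = ∑ i, ⟪g i, (W ^ 2 • g) i⟫ := by
    simp only [← real_inner_self_eq_norm_sq]
    rw [← sum_inner_transpose_smul, hW, ← mul_smul, sq]
  have h := sum_inner_smul_nonneg (posSemidef_one_sub_sq_smul_regularizedInverse_sq hK ha hν) g
  simp only [sub_smul, one_smul, smul_assoc, Pi.sub_apply, Pi.smul_apply, inner_sub_right,
    real_inner_smul_right, real_inner_self_eq_norm_sq, Finset.sum_sub_distrib,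
    ← Finset.mul_sum] at h
  rw [norm_sq_smul]
  exact sub_nonneg.mp h

lemma expect_norm_sq_regularizedInverse_smul_le (hK : K.PosSemidef) (ha : 0 ≤ a) (hν : 0 < ν)
    (g : ι → E) :
    𝔼 i, ‖(regularizedInverse K a ν • g) i‖ ^ 2 ≤ (𝔼 i, ‖g i‖ ^ 2) / ν ^ 2 := by
  rw [le_div_iff₀' (by positivity), Fintype.expect_eq_sum_div_card,
    Fintype.expect_eq_sum_div_card, ← mul_div_assoc]
  gcongr
  exact sq_mul_sum_norm_sq_regularizedInverse_smul_le hK ha hν g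

end RegularizedInverse

section Descent

variable {E : Type*} [NormedAddCommGroup E] [InnerProductSpace ℝ E] [CompleteSpace E]
  {V : E → ℝ} {C : ℝ≥0}

lemma le_add_inner_gradient_add_norm_sq (hV : Differentiable ℝ V) (hlip : LipschitzWith C (∇ V))
    (x v : E) : V (x + v) ≤ V x + ⟪∇ V x, v⟫ + C / 2 * ‖v‖ ^ 2 := by
  have hline (t : ℝ) : HasDerivAt (fun s : ℝ ↦ V (x + s • v)) ⟪∇ V (x + t • v), v⟫ t := by
    rw [inner_gradient_left]
    refine (hV _).hasFDerivAt.comp_hasDerivAt t ?_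
    simpa using ((hasDerivAt_id t).smul_const v).const_add x
  have hparabola (t : ℝ) :
      HasDerivAt (fun s : ℝ ↦ V x + s * ⟪∇ V x, v⟫ + C / 2 * ‖v‖ ^ 2 * s ^ 2)
        (⟪∇ V x, v⟫ + C * t * ‖v‖ ^ 2) t := by
    refine ((((hasDerivAt_id t).mul_const ⟪∇ V x, v⟫).const_add (V x)).add
      ((hasDerivAt_pow 2 t).const_mul (C / 2 * ‖v‖ ^ 2))).congr_deriv ?_
    push_cast
    ring
  have slope_le (t : ℝ) (ht : 0 ≤ t) :
      ⟪∇ V (x + t • v), v⟫ ≤ ⟪∇ V x, v⟫ + C * t * ‖v‖ ^ 2 := by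
    rw [← sub_le_iff_le_add', ← inner_sub_left]
    calc ⟪∇ V (x + t • v) - ∇ V x, v⟫ ≤ ‖∇ V (x + t • v) - ∇ V x‖ * ‖v‖ := real_inner_le_norm _ _
      _ ≤ C * ‖x + t • v - x‖ * ‖v‖ := by gcongr; exact hlip.norm_sub_le _ _
      _ = C * t * ‖v‖ ^ 2 := by
        rw [add_sub_cancel_left, norm_smul, Real.norm_of_nonneg ht]
        ring
  have line_le_parabola := image_le_of_deriv_right_le_deriv_boundary (a := 0) (b := 1)
    (fun t _ ↦ (hline t).continuousAt.continuousWithinAt) (fun t _ ↦ (hline t).hasDerivWithinAt)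
    (by simp) (fun t _ ↦ (hparabola t).continuousAt.continuousWithinAt)
    (fun t _ ↦ (hparabola t).hasDerivWithinAt) (fun t ht ↦ slope_le t ht.1)
    (Set.right_mem_Icc.mpr zero_le_one)
  simpa using line_le_parabola

lemma expect_sub_smul_le_of_lipschitzWith_gradient {ι : Type*} [Fintype ι] (hV : Differentiable ℝ V)
    (hlip : LipschitzWith C (∇ V)) (h : ℝ) (x v : ι → E) :
    𝔼 i, V (x i - h • v i) ≤
      𝔼 i, V (x i) - h * 𝔼 i, ⟪∇ V (x i), v i⟫ + C / 2 * h ^ 2 * 𝔼 i, ‖v i‖ ^ 2 := by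
  rw [Finset.mul_expect, Finset.mul_expect, ← Finset.expect_sub_distrib,
    ← Finset.expect_add_distrib]
  refine Finset.expect_le_expect fun i _ ↦ ?_
  have descent := le_add_inner_gradient_add_norm_sq hV hlip (x i) (-(h • v i))
  rw [← sub_eq_add_neg, inner_neg_right, real_inner_smul_right, norm_neg, norm_smul, mul_pow,
    Real.norm_eq_abs, sq_abs] at descent
  linarith

end Descent

section Means

variable {ι : Type*} [Fintype ι]

lemma expect_le_of_nonneg_of_forall_le {g : ι → ℝ} {c : ℝ} (hc : 0 ≤ c) (hg : ∀ i, g i ≤ c) :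
    𝔼 i, g i ≤ c := by
  cases isEmpty_or_nonempty ι
  · simpa using hc
  · exact Finset.expect_le Finset.univ_nonempty fun i _ ↦ hg i

lemma norm_inv_card_smul_sum_le_s13 {E : Type*} [NormedAddCommGroup E] [NormedSpace ℝ E] (g : ι → E) :
    ‖(Fintype.card ι : ℝ)⁻¹ • ∑ i, g i‖ ≤ 𝔼 i, ‖g i‖ := by
  rw [norm_smul, norm_inv, Real.norm_natCast, Fintype.expect_eq_sum_div_card, div_eq_inv_mul]
  gcongr
  exact norm_sum_le _ _

lemma expect_sq_le_expect_sq (g : ι → ℝ) : (𝔼 i, g i) ^ 2 ≤ 𝔼 i, g i ^ 2 := by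
  cases isEmpty_or_nonempty ι
  · simp
  · simpa using Finset.expect_mul_sq_le_sq_mul_sq Finset.univ (fun _ ↦ 1) g

lemma expect_inner_le_sqrt_mul_sqrt {E : Type*} [NormedAddCommGroup E] [InnerProductSpace ℝ E]
    (f g : ι → E) : 𝔼 i, ⟪f i, g i⟫ ≤ √(𝔼 i, ‖f i‖ ^ 2) * √(𝔼 i, ‖g i‖ ^ 2) := by
  rw [← Real.sqrt_mul (Finset.expect_nonneg fun _ _ ↦ sq_nonneg _)]
  exact (Finset.expect_le_expect fun i _ ↦ real_inner_le_norm (f i) (g i)).trans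
    (Real.le_sqrt_of_sq_le (Finset.expect_mul_sq_le_sq_mul_sq _ _ _))

lemma expect_rpow_le_rpow_expect {p : ℝ} (hp₀ : 0 ≤ p) (hp₁ : p ≤ 1) {v : ι → ℝ}
    (hv : ∀ i, 0 ≤ v i) : 𝔼 i, v i ^ p ≤ (𝔼 i, v i) ^ p := by
  cases isEmpty_or_nonempty ι
  · simpa using Real.rpow_nonneg le_rfl p
  have jensen := (Real.concaveOn_rpow hp₀ hp₁).le_map_sum (t := Finset.univ)
    (w := fun _ : ι ↦ (Fintype.card ι : ℝ)⁻¹) (p := v) (fun _ _ ↦ by positivity) (by simp)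
    (fun i _ ↦ hv i)
  simpa only [smul_eq_mul, ← Finset.mul_sum, Fintype.expect_eq_sum_div_card,
    div_eq_inv_mul] using jensen

lemma rpow_le_one_add {t p : ℝ} (ht : 0 ≤ t) (hp₀ : 0 ≤ p) (hp₁ : p ≤ 1) : t ^ p ≤ 1 + t := by
  have bernoulli := rpow_one_add_le_one_add_mul_self (s := t - 1) (by linarith) hp₀ hp₁
  rw [add_sub_cancel] at bernoulli
  nlinarith

lemma rpow_sq_eq_rpow_two_mul {t : ℝ} (ht : 0 ≤ t) (α : ℝ) : (t ^ α) ^ 2 = t ^ (2 * α) := by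
  rw [← Real.rpow_mul_natCast ht, mul_comm, Nat.cast_ofNat]

end Means

section Gradient

lemma norm_gradient_le_of_abs_fderiv_single_le {ι : Type*} [Fintype ι] [DecidableEq ι]
    {f : EuclideanSpace ℝ ι → ℝ} {y : EuclideanSpace ℝ ι} {B : ℝ} (hB : 0 ≤ B)
    (hpartial : ∀ i, |fderiv ℝ f y (EuclideanSpace.single i 1)| ≤ B) :
    ‖∇ f y‖ ≤ B * √(Fintype.card ι) := by
  have coord_eq (i : ι) : ∇ f y i = fderiv ℝ f y (EuclideanSpace.single i 1) := by
    rw [← inner_gradient_left, EuclideanSpace.inner_single_right]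
    simp
  rw [EuclideanSpace.norm_eq, Real.sqrt_le_left (by positivity), mul_pow,
    Real.sq_sqrt (Nat.cast_nonneg _), mul_comm, ← nsmul_eq_mul]
  refine Finset.sum_le_card_nsmul _ _ _ fun i _ ↦ ?_
  rw [coord_eq, Real.norm_eq_abs]
  gcongr
  exact hpartial i

lemma fderiv_partial_right_apply {E F G : Type*} [NormedAddCommGroup E] [NormedSpace ℝ E]
    [NormedAddCommGroup F] [NormedSpace ℝ F] [NormedAddCommGroup G] [NormedSpace ℝ G]
    {k : E → F → G} {x : E} {y : F} (hk : DifferentiableAt ℝ (fun p : E × F ↦ k p.1 p.2) (x, y))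
    (v : F) : fderiv ℝ (k x) y v = fderiv ℝ (fun p : E × F ↦ k p.1 p.2) (x, y) (0, v) := by
  have hcomp := hk.hasFDerivAt.comp y (hasFDerivAt_prodMk_right x y)
  exact DFunLike.congr_fun hcomp.fderiv v

lemma norm_gradient_partial_right_le {d : ℕ}
    {k : EuclideanSpace ℝ (Fin d) → EuclideanSpace ℝ (Fin d) → ℝ} {B : ℝ} (hB : 0 ≤ B)
    (hk : Differentiable ℝ fun p : EuclideanSpace ℝ (Fin d) × EuclideanSpace ℝ (Fin d) ↦ k p.1 p.2)
    (hk₂ : ∀ p i, |fderiv ℝ (fun q : EuclideanSpace ℝ (Fin d) × EuclideanSpace ℝ (Fin d) ↦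
      k q.1 q.2) p (pairBasis d (Sum.inr i))| ≤ B)
    (x y : EuclideanSpace ℝ (Fin d)) : ‖∇ (k x) y‖ ≤ B * √d := by
  have hpartial (i : Fin d) : |fderiv ℝ (k x) y (EuclideanSpace.single i 1)| ≤ B := by
    rw [fderiv_partial_right_apply (hk _)]
    exact hk₂ (x, y) i
  simpa using norm_gradient_le_of_abs_fderiv_single_le hB hpartial

lemma differentiable_gradient_of_contDiff_two {E : Type*} [NormedAddCommGroup E]
    [InnerProductSpace ℝ E] [CompleteSpace E] {V : E → ℝ} (hV : ContDiff ℝ 2 V) :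
    Differentiable ℝ (∇ V) :=
  (InnerProductSpace.toDual ℝ E).symm.differentiable.comp
    ((hV.fderiv_right (m := 1) (by norm_num)).differentiable one_ne_zero)

end Gradient

section SVGD

open scoped Matrix.Module

variable {E : Type*} [NormedAddCommGroup E] [InnerProductSpace ℝ E] [CompleteSpace E]
  {N : ℕ} {k : E → E → ℝ} {V : E → ℝ} {B D : ℝ}

/-- The Gram matrix `K` of the kernel `k` at the configuration `x`. -/
def gramMatrix (k : E → E → ℝ) (x : Fin N → E) : Matrix (Fin N) (Fin N) ℝ :=
  Matrix.of fun i j ↦ k (x i) (x j)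

/-- The repulsion term `(1/N) Σⱼ ∇₂k(xˡ, xʲ)` of SVGD, which pushes the particles apart. -/
def repulsion (k : E → E → ℝ) (x : Fin N → E) : Fin N → E :=
  fun l ↦ (N : ℝ)⁻¹ • ∑ j, ∇ (k (x l)) (x j)

/-- The SVGD direction `(1/N) Σⱼ (k(xˡ, xʲ) ∇V(xʲ) - ∇₂k(xˡ, xʲ))`, without regularization. -/
def svgdField (k : E → E → ℝ) (V : E → ℝ) (x : Fin N → E) : Fin N → E :=
  fun l ↦ (N : ℝ)⁻¹ • ∑ j, (k (x l) (x j) • ∇ V (x j) - ∇ (k (x l)) (x j))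

lemma svgdField_eq_sub_repulsion (k : E → E → ℝ) (V : E → ℝ) (x : Fin N → E) :
    svgdField k V x = (N : ℝ)⁻¹ • gramMatrix k x • (fun j ↦ ∇ V (x j)) - repulsion k x := by
  ext l
  simp [svgdField, repulsion, gramMatrix, smul_sub]

lemma norm_repulsion_le (hk' : ∀ y z, ‖∇ (k y) z‖ ≤ D) (x : Fin N → E) (l : Fin N) :
    ‖repulsion k x l‖ ≤ D := by
  have mean_le := norm_inv_card_smul_sum_le_s13 fun j ↦ ∇ (k (x l)) (x j)
  rw [Fintype.card_fin] at mean_le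
  exact mean_le.trans
    (expect_le_of_nonneg_of_forall_le ((norm_nonneg _).trans (hk' 0 0)) fun j ↦ hk' _ _)

lemma norm_svgdField_sq_le (hk : ∀ y z, |k y z| ≤ B) (hk' : ∀ y z, ‖∇ (k y) z‖ ≤ D)
    (x : Fin N → E) (l : Fin N) :
    ‖svgdField k V x l‖ ^ 2 ≤ 2 * (B ^ 2 * 𝔼 j, ‖∇ V (x j)‖ ^ 2 + D ^ 2) := by
  have : Nonempty (Fin N) := ⟨l⟩
  set c : Fin N → E := fun j ↦ k (x l) (x j) • ∇ V (x j) - ∇ (k (x l)) (x j)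
  have mean_le : ‖svgdField k V x l‖ ≤ 𝔼 j, ‖c j‖ := by
    simpa only [svgdField, c, Fintype.card_fin] using norm_inv_card_smul_sum_le_s13 c
  have summand_le (j : Fin N) : ‖c j‖ ^ 2 ≤ 2 * (B ^ 2 * ‖∇ V (x j)‖ ^ 2 + D ^ 2) := by
    calc ‖c j‖ ^ 2 ≤ (‖k (x l) (x j) • ∇ V (x j)‖ + ‖∇ (k (x l)) (x j)‖) ^ 2 := by
          gcongr
          exact norm_sub_le _ _
      _ ≤ (B * ‖∇ V (x j)‖ + D) ^ 2 := by
          rw [norm_smul]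
          gcongr
          exacts [hk _ _, hk' _ _]
      _ ≤ 2 * ((B * ‖∇ V (x j)‖) ^ 2 + D ^ 2) := add_sq_le
      _ = 2 * (B ^ 2 * ‖∇ V (x j)‖ ^ 2 + D ^ 2) := by rw [mul_pow]
  calc ‖svgdField k V x l‖ ^ 2 ≤ (𝔼 j, ‖c j‖) ^ 2 := by gcongr
    _ ≤ 𝔼 j, ‖c j‖ ^ 2 := expect_sq_le_expect_sq _
    _ ≤ 𝔼 j, 2 * (B ^ 2 * ‖∇ V (x j)‖ ^ 2 + D ^ 2) :=
        Finset.expect_le_expect fun j _ ↦ summand_le j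
    _ = 2 * (B ^ 2 * 𝔼 j, ‖∇ V (x j)‖ ^ 2 + D ^ 2) := by
        rw [← Finset.mul_expect, Finset.expect_add_distrib, ← Finset.mul_expect,
          Fintype.expect_const]

end SVGD

section RSVGD

open scoped Matrix.Module

variable {d N : ℕ} {k : EuclideanSpace ℝ (Fin d) → EuclideanSpace ℝ (Fin d) → ℝ}
  {V : EuclideanSpace ℝ (Fin d) → ℝ} {B D ν : ℝ} {x : Fin N → EuclideanSpace ℝ (Fin d)}

lemma steinField_eq_regularizedInverse_smul :
    steinField d N k V ν x =
      regularizedInverse (gramMatrix k x) ((1 - ν) / N) ν • svgdField k V x :=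
  rfl

lemma steinField_eq_attraction_sub_repulsion :
    steinField d N k V ν x =
      ((N : ℝ)⁻¹ • (regularizedInverse (gramMatrix k x) ((1 - ν) / N) ν * gramMatrix k x)) •
          (fun j ↦ ∇ V (x j)) -
        regularizedInverse (gramMatrix k x) ((1 - ν) / N) ν • repulsion k x := by
  rw [steinField_eq_regularizedInverse_smul, svgdField_eq_sub_repulsion, smul_sub,
    ← mul_smul_comm, mul_smul, smul_assoc]

lemma expect_norm_sq_steinField_le (hgram : (gramMatrix k x).PosSemidef)
    (hk : ∀ y z, |k y z| ≤ B) (hk' : ∀ y z, ‖∇ (k y) z‖ ≤ D) (hν : ν ∈ Set.Ioc (0 : ℝ) 1) :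
    𝔼 i, ‖steinField d N k V ν x i‖ ^ 2 ≤
      2 * (B ^ 2 * 𝔼 j, ‖∇ V (x j)‖ ^ 2 + D ^ 2) / ν ^ 2 := by
  rw [steinField_eq_regularizedInverse_smul]
  refine (expect_norm_sq_regularizedInverse_smul_le hgram (div_nonneg (sub_nonneg.mpr hν.2)
    (Nat.cast_nonneg N)) hν.1 _).trans ?_
  gcongr
  exact expect_le_of_nonneg_of_forall_le (by positivity) (norm_svgdField_sq_le hk hk' x)

lemma neg_mul_sqrt_le_expect_inner_steinField (hgram : (gramMatrix k x).PosSemidef)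
    (hk' : ∀ y z, ‖∇ (k y) z‖ ≤ D) (hν : ν ∈ Set.Ioc (0 : ℝ) 1) :
    -(D / ν * √(𝔼 j, ‖∇ V (x j)‖ ^ 2)) ≤ 𝔼 i, ⟪∇ V (x i), steinField d N k V ν x i⟫ := by
  have hD : 0 ≤ D := (norm_nonneg _).trans (hk' 0 0)
  have hN : (0 : ℝ) ≤ (N : ℝ)⁻¹ := by positivity
  have ha : 0 ≤ (1 - ν) / N := div_nonneg (sub_nonneg.mpr hν.2) (Nat.cast_nonneg N)
  set W := regularizedInverse (gramMatrix k x) ((1 - ν) / N) ν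
  set G : Fin N → EuclideanSpace ℝ (Fin d) := fun j ↦ ∇ V (x j)
  have attraction_nonneg : 0 ≤ 𝔼 i, ⟪G i, (((N : ℝ)⁻¹ • (W * gramMatrix k x)) • G) i⟫ := by
    rw [Fintype.expect_eq_sum_div_card]
    exact div_nonneg (sum_inner_smul_nonneg
      ((posSemidef_regularizedInverse_mul hgram ha hν.1).smul hN) G) (Nat.cast_nonneg _)
  have repulsion_le : 𝔼 i, ‖(W • repulsion k x) i‖ ^ 2 ≤ (D / ν) ^ 2 := by
    refine (expect_norm_sq_regularizedInverse_smul_le hgram ha hν.1 _).trans ?_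
    rw [div_pow]
    gcongr
    refine expect_le_of_nonneg_of_forall_le (sq_nonneg D) fun l ↦ ?_
    gcongr
    exact norm_repulsion_le hk' x l
  calc -(D / ν * √(𝔼 j, ‖G j‖ ^ 2))
      ≤ -(√(𝔼 j, ‖G j‖ ^ 2) * √(𝔼 i, ‖(W • repulsion k x) i‖ ^ 2)) := by
        rw [mul_comm]
        gcongr
        exact (Real.sqrt_le_left (div_nonneg hD hν.1.le)).mpr repulsion_le
    _ ≤ -𝔼 i, ⟪G i, (W • repulsion k x) i⟫ := neg_le_neg (expect_inner_le_sqrt_mul_sqrt _ _)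
    _ ≤ 𝔼 i, ⟪G i, (((N : ℝ)⁻¹ • (W * gramMatrix k x)) • G) i⟫ -
          𝔼 i, ⟪G i, (W • repulsion k x) i⟫ := by linarith
    _ = 𝔼 i, ⟪G i, steinField d N k V ν x i⟫ := by
        simp only [steinField_eq_attraction_sub_repulsion, W, G, Pi.sub_apply, inner_sub_right,
          Finset.expect_sub_distrib]

lemma expect_sub_smul_steinField_le {C : ℝ≥0} {h : ℝ} (hgram : (gramMatrix k x).PosSemidef)
    (hk : ∀ y z, |k y z| ≤ B) (hk' : ∀ y z, ‖∇ (k y) z‖ ≤ D) (hV : Differentiable ℝ V)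
    (hlip : LipschitzWith C (∇ V)) (hν : ν ∈ Set.Ioc (0 : ℝ) 1) (hh : 0 ≤ h) :
    𝔼 i, V (x i - h • steinField d N k V ν x i) ≤
      𝔼 i, V (x i) + h * (D / ν * √(𝔼 i, ‖∇ V (x i)‖ ^ 2)) +
        C * (B ^ 2 * 𝔼 i, ‖∇ V (x i)‖ ^ 2 + D ^ 2) * (h / ν) ^ 2 := by
  have first_order := mul_le_mul_of_nonneg_left
    (neg_mul_sqrt_le_expect_inner_steinField (V := V) hgram hk' hν) hh
  have second_order := mul_le_mul_of_nonneg_left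
    (expect_norm_sq_steinField_le (V := V) hgram hk hk' hν)
    (show 0 ≤ (C : ℝ) / 2 * h ^ 2 by positivity)
  calc 𝔼 i, V (x i - h • steinField d N k V ν x i)
      ≤ 𝔼 i, V (x i) - h * 𝔼 i, ⟪∇ V (x i), steinField d N k V ν x i⟫ +
          C / 2 * h ^ 2 * 𝔼 i, ‖steinField d N k V ν x i‖ ^ 2 :=
        expect_sub_smul_le_of_lipschitzWith_gradient hV hlip h x _
    _ ≤ 𝔼 i, V (x i) + h * (D / ν * √(𝔼 i, ‖∇ V (x i)‖ ^ 2)) +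
          C / 2 * h ^ 2 * (2 * (B ^ 2 * 𝔼 i, ‖∇ V (x i)‖ ^ 2 + D ^ 2) / ν ^ 2) := by linarith
    _ = 𝔼 i, V (x i) + h * (D / ν * √(𝔼 i, ‖∇ V (x i)‖ ^ 2)) +
          C * (B ^ 2 * 𝔼 i, ‖∇ V (x i)‖ ^ 2 + D ^ 2) * (h / ν) ^ 2 := by ring

end RSVGD

lemma expect_norm_gradient_sq_le {E ι : Type*} [NormedAddCommGroup E] [InnerProductSpace ℝ E]
    [CompleteSpace E] [Fintype ι] {V : E → ℝ} {A α : ℝ} (hV : ∀ y, 0 ≤ V y)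
    (hα : α ∈ Set.Icc (0 : ℝ) (1 / 2)) (hgrad : ∀ y, ‖∇ V y‖ ≤ A * V y ^ α) (x : ι → E) :
    𝔼 i, ‖∇ V (x i)‖ ^ 2 ≤ A ^ 2 * ((𝔼 i, V (x i)) ^ α) ^ 2 := by
  calc 𝔼 i, ‖∇ V (x i)‖ ^ 2 ≤ 𝔼 i, A ^ 2 * V (x i) ^ (2 * α) := by
        refine Finset.expect_le_expect fun i _ ↦ ?_
        rw [← rpow_sq_eq_rpow_two_mul (hV _), ← mul_pow]
        gcongr
        exact hgrad _
    _ = A ^ 2 * 𝔼 i, V (x i) ^ (2 * α) := (Finset.mul_expect _ _ _).symm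
    _ ≤ A ^ 2 * (𝔼 i, V (x i)) ^ (2 * α) := by
        gcongr
        exact expect_rpow_le_rpow_expect (by linarith [hα.1]) (by linarith [hα.2]) fun i ↦ hV _
    _ = A ^ 2 * ((𝔼 i, V (x i)) ^ α) ^ 2 := by
        rw [rpow_sq_eq_rpow_two_mul (Finset.expect_nonneg fun _ _ ↦ hV _)]

theorem statement_13_general {d N : ℕ}
    {k : EuclideanSpace ℝ (Fin d) → EuclideanSpace ℝ (Fin d) → ℝ}
    {V : EuclideanSpace ℝ (Fin d) → ℝ} {B A α ν h : ℝ} {C_V : ℝ≥0}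
    {x : Fin N → EuclideanSpace ℝ (Fin d)}
    (hgram : (Matrix.of fun i j ↦ k (x i) (x j)).PosSemidef)
    (hk : Differentiable ℝ fun p : EuclideanSpace ℝ (Fin d) × EuclideanSpace ℝ (Fin d) ↦ k p.1 p.2)
    (hk₀ : ∀ y z, |k y z| ≤ B)
    (hk₁ : ∀ p i, |fderiv ℝ (fun q : EuclideanSpace ℝ (Fin d) × EuclideanSpace ℝ (Fin d) ↦
      k q.1 q.2) p (pairBasis d (Sum.inr i))| ≤ B)
    (hV : Differentiable ℝ V) (hlip : LipschitzWith C_V (∇ V)) (hV₀ : ∀ y, 0 ≤ V y)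
    (hA : 0 ≤ A) (hα : α ∈ Set.Icc (0 : ℝ) (1 / 2)) (hgrad : ∀ y, ‖∇ V y‖ ≤ A * V y ^ α)
    (hν : ν ∈ Set.Ioc (0 : ℝ) 1) (hh : 0 ≤ h) :
    (N : ℝ)⁻¹ * ∑ i, V (x i - h • steinField d N k V ν x i) ≤
      (1 + C_V * A ^ 2 * (B * h / ν) ^ 2) * ((N : ℝ)⁻¹ * ∑ i, V (x i)) +
        A * √d * (B * h / ν) * ((N : ℝ)⁻¹ * ∑ i, V (x i)) ^ α +
        C_V * (A ^ 2 + d) * (B * h / ν) ^ 2 := by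
  have mean_eq (g : Fin N → ℝ) : (N : ℝ)⁻¹ * ∑ i, g i = 𝔼 i, g i := by
    rw [Fintype.expect_eq_sum_div_card, Fintype.card_fin, div_eq_inv_mul]
  simp only [mean_eq]
  set f := 𝔼 i, V (x i)
  have hB : 0 ≤ B := (abs_nonneg _).trans (hk₀ 0 0)
  have hf : 0 ≤ f := Finset.expect_nonneg fun _ _ ↦ hV₀ _
  have hgrad_sq : 𝔼 i, ‖∇ V (x i)‖ ^ 2 ≤ A ^ 2 * (f ^ α) ^ 2 :=
    expect_norm_gradient_sq_le hV₀ hα hgrad x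
  have hpow : (f ^ α) ^ 2 ≤ 1 + f := by
    rw [rpow_sq_eq_rpow_two_mul hf]
    exact rpow_le_one_add hf (by linarith [hα.1]) (by linarith [hα.2])
  have hsqrt : √(𝔼 i, ‖∇ V (x i)‖ ^ 2) ≤ A * f ^ α := by
    rwa [Real.sqrt_le_left (by positivity), mul_pow]
  calc 𝔼 i, V (x i - h • steinField d N k V ν x i)
      ≤ f + h * (B * √d / ν * √(𝔼 i, ‖∇ V (x i)‖ ^ 2)) +
          C_V * (B ^ 2 * 𝔼 i, ‖∇ V (x i)‖ ^ 2 + (B * √d) ^ 2) * (h / ν) ^ 2 :=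
        expect_sub_smul_steinField_le hgram hk₀ (norm_gradient_partial_right_le hB hk hk₁) hV hlip
          hν hh
    _ ≤ f + h * (B * √d / ν * (A * f ^ α)) +
          C_V * (B ^ 2 * (A ^ 2 * (1 + f)) + (B * √d) ^ 2) * (h / ν) ^ 2 := by
        have := hν.1
        gcongr
        exact hgrad_sq.trans (by gcongr)
    _ = (1 + C_V * A ^ 2 * (B * h / ν) ^ 2) * f + A * √d * (B * h / ν) * f ^ α +
          C_V * (A ^ 2 + d) * (B * h / ν) ^ 2 := by
        rw [mul_pow B, Real.sq_sqrt (Nat.cast_nonneg d)]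
        ring

/-- One-step recursion for the averaged potential along R-SVGD: with
`η = B·h/ν ≤ 1`, `f(x̲) = (1/N)Σᵢ V(xⁱ)` and `x̲′ = x̲ − h·𝖳_ν(x̲)`,
`f(x̲′) ≤ (1 + C_V·A²·η²)·f(x̲) + A·√d·η·f(x̲)^α + C_V·(A² + d)·η²`. -/
theorem statement_13 {d N : ℕ}
    (k : EuclideanSpace ℝ (Fin d) → EuclideanSpace ℝ (Fin d) → ℝ)
    (V : EuclideanSpace ℝ (Fin d) → ℝ) (B A α ν C_V h : ℝ)
    (hB : 0 < B)
    (hksymm : ∀ x y, k x y = k y x)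
    (hgram : ∀ (m : ℕ) (y : Fin m → EuclideanSpace ℝ (Fin d)),
      (Matrix.of fun a b : Fin m => k (y a) (y b)).PosSemidef)
    (hkC2 : ContDiff ℝ 2 (fun p : EuclideanSpace ℝ (Fin d) × EuclideanSpace ℝ (Fin d) =>
      k p.1 p.2))
    (hk0 : ∀ x y, |k x y| ≤ B)
    (hk1 : ∀ (p : EuclideanSpace ℝ (Fin d) × EuclideanSpace ℝ (Fin d)) (v : Fin d ⊕ Fin d),
      |fderiv ℝ (fun q : EuclideanSpace ℝ (Fin d) × EuclideanSpace ℝ (Fin d) => k q.1 q.2) p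
        (pairBasis d v)| ≤ B)
    (hk2 : ∀ (p : EuclideanSpace ℝ (Fin d) × EuclideanSpace ℝ (Fin d)) (v w : Fin d ⊕ Fin d),
      |fderiv ℝ (fun q : EuclideanSpace ℝ (Fin d) × EuclideanSpace ℝ (Fin d) =>
          fderiv ℝ (fun r : EuclideanSpace ℝ (Fin d) × EuclideanSpace ℝ (Fin d) => k r.1 r.2) q
            (pairBasis d v)) p (pairBasis d w)| ≤ B)
    (hVC2 : ContDiff ℝ 2 V)
    (hHess : ∀ z, ‖fderiv ℝ (fun y => gradient V y) z‖ ≤ C_V)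
    (hVpos : ∀ x, 0 < V x)
    (hA : 0 < A) (hα : α ∈ Set.Icc (0 : ℝ) (1 / 2))
    (hVgrad : ∀ x, ‖gradient V x‖ ≤ A * V x ^ α)
    (hν : ν ∈ Set.Ioc (0 : ℝ) 1)
    (hh : 0 < h) (hhν : h ≤ ν / B)
    (x : Fin N → EuclideanSpace ℝ (Fin d)) :
    (N : ℝ)⁻¹ * ∑ i : Fin N, V (x i - h • steinField d N k V ν x i) ≤
      (1 + C_V * A ^ 2 * (B * h / ν) ^ 2) * ((N : ℝ)⁻¹ * ∑ i : Fin N, V (x i)) +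
        A * Real.sqrt d * (B * h / ν) * ((N : ℝ)⁻¹ * ∑ i : Fin N, V (x i)) ^ α +
        C_V * (A ^ 2 + d) * (B * h / ν) ^ 2 := by
  lift C_V to ℝ≥0 using (norm_nonneg _).trans (hHess 0)
  exact statement_13_general (hgram N x) (hkC2.differentiable two_ne_zero) hk0
    (fun p i ↦ hk1 p (Sum.inr i)) (hVC2.differentiable two_ne_zero)
    (lipschitzWith_of_nnnorm_fderiv_le (differentiable_gradient_of_contDiff_two hVC2) hHess)
    (fun y ↦ (hVpos y).le) hA.le hα hVgrad hν hh.le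

end
end

section
/- Let α ∈ [0,1/2], A > 0, C_V > 0, and d ≥ 1 be real numbers. Let (fₙ)_{n≥0} be a sequence of nonnegative reals and (ηₙ)_{n≥1} a sequence in (0,1] such that η_{n+1} ≤ 1/(16(1−α)²·C_V·A²·Σ_{l=1}^n η_l) for all n ≥ 1, and f_{n+1} ≤ (1 + C_V·A²·η_{n+1}²)·fₙ + A·√d·η_{n+1}·fₙ^α + C_V·(A² + d)·η_{n+1}² for all n ≥ 0. Then there exists a constant M > 0, depending only on A, C_V and α, such that for all n ≥ 1: fₙ ≤ M·(d^{1/(1−α)} + f₀)·max{ (Σ_{l=1}^n η_l)^{1/(1−α)}, 1 }. -/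
/-!
Write `p = 1 / (1 - α)` and `Sₙ = ∑_{l=1}^n η_l`. The recursion is a perturbed Euler scheme for
`y' = A √d y ^ α`, whose solutions grow like `t ^ p`, so we compare `fₙ` with the barrier
`L (θ + Sₙ) ^ p`. By Bernoulli's inequality a step of length `η` raises the barrier at `x` by at
least `p L x ^ (p - 1) η`, and each of the three error terms of the recursion is at most a multiple
of `L x ^ (p - 1) η`. Since the step-size condition makes `C_V A² η_{n+1} Sₙ ≤ 1 / (16 (1 - α)²)`,
which is less than `p` exactly when `α < 15 / 16`, the sum of the three multiples is at most `p`
once `θ` is small and `L` is a large multiple of `d ^ p + f₀`.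
-/

open Filter Set

theorem rpow_add_mul_rpow_sub_one_mul_le {p x e : ℝ} (hp : 1 ≤ p) (hx : 0 < x) (he : -x ≤ e) :
    x ^ p + p * x ^ (p - 1) * e ≤ (x + e) ^ p := by
  have hex : -1 ≤ e / x := by rwa [le_div_iff₀ hx, neg_one_mul]
  calc x ^ p + p * x ^ (p - 1) * e = x ^ p * (1 + p * (e / x)) := by
        rw [Real.rpow_sub_one hx.ne']; ring
    _ ≤ x ^ p * (1 + e / x) ^ p := by
        gcongr; exact one_add_mul_self_le_rpow_one_add hex hp
    _ = (x + e) ^ p := by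
        rw [← Real.mul_rpow hx.le (by linarith), mul_add, mul_one, mul_div_cancel₀ _ hx.ne']

theorem add_rpow_le_mul_max_rpow_one {p s t : ℝ} (hp : 0 ≤ p) (hs : 0 ≤ s) (ht : 0 ≤ t) :
    (t + s) ^ p ≤ (t + 1) ^ p * max (s ^ p) 1 := by
  have hmax : (max s 1) ^ p = max (s ^ p) 1 := by
    rw [(Real.monotoneOn_rpow_Ici_of_exponent_nonneg hp).map_max hs (mem_Ici.2 zero_le_one),
      Real.one_rpow]
  have hle : t + s ≤ (t + 1) * max s 1 := by
    nlinarith [le_max_left s 1, le_max_right s 1]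
  calc (t + s) ^ p ≤ ((t + 1) * max s 1) ^ p := by gcongr
    _ = (t + 1) ^ p * max (s ^ p) 1 := by
        rw [Real.mul_rpow (by positivity) (by positivity), hmax]

theorem sum_Icc_one_nonneg {η : ℕ → ℝ} (hη : ∀ n, 1 ≤ n → 0 ≤ η n) (n : ℕ) :
    0 ≤ ∑ l ∈ Finset.Icc 1 n, η l :=
  Finset.sum_nonneg fun l hl => hη l (Finset.mem_Icc.1 hl).1

section Barrier

variable {α p : ℝ}

theorem le_rpow_add_rpow_one_sub {d y : ℝ} (hp : 0 ≤ p) (hpα : p * (1 - α) = 1) (hd : 0 ≤ d)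
    (hy : 0 ≤ y) : d ≤ (d ^ p + y) ^ (1 - α) := by
  have hα : 0 ≤ 1 - α := by nlinarith
  calc d = (d ^ p) ^ (1 - α) := by rw [← Real.rpow_mul hd, hpα, Real.rpow_one]
    _ ≤ (d ^ p + y) ^ (1 - α) := by gcongr; linarith

theorem rpow_one_sub_mul_rpow_le {L x y : ℝ} (hp : 1 ≤ p) (hpα : p * (1 - α) = 1) (hL : 0 < L)
    (hx : 0 ≤ x) (hy : 0 ≤ y) (hyL : y ≤ L * x ^ p) :
    L ^ (1 - α) * y ^ α ≤ L * x ^ (p - 1) := by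
  have hα : 0 ≤ α := by nlinarith
  calc L ^ (1 - α) * y ^ α ≤ L ^ (1 - α) * (L * x ^ p) ^ α := by gcongr
    _ = L ^ (1 - α) * L ^ α * x ^ (p * α) := by
        rw [Real.mul_rpow hL.le (by positivity), ← Real.rpow_mul hx, mul_assoc]
    _ = L * x ^ (p - 1) := by
        rw [← Real.rpow_add hL, sub_add_cancel, Real.rpow_one, show p * α = p - 1 by linarith]

variable {a b c u v L : ℝ}

theorem recursion_step_le_mul_add_rpow {x y e : ℝ} (hp : 1 ≤ p) (hpα : p * (1 - α) = 1)
    (hc : 0 ≤ c) (hu : 0 ≤ u) (hv : 0 ≤ v) (hL : 0 < L) (hx : 0 < x) (hy : 0 ≤ y)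
    (hyL : y ≤ L * x ^ p) (he : e ∈ Icc 0 1) (ha : a ≤ u * L ^ (1 - α))
    (hb : b ≤ v * (L * x ^ (p - 1))) (hcuv : c * e * x + u + v ≤ p) :
    (1 + c * e ^ 2) * y + a * e * y ^ α + b * e ^ 2 ≤ L * (x + e) ^ p := by
  obtain ⟨he0, he1⟩ := he
  set R := L * x ^ (p - 1) with hR
  have : 0 ≤ R := by positivity
  have hRx : L * x ^ p = R * x := by
    rw [hR, Real.rpow_sub_one hx.ne']; field_simp
  have hlinear : (1 + c * e ^ 2) * y ≤ L * x ^ p + c * e * x * (R * e) :=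
    calc (1 + c * e ^ 2) * y ≤ (1 + c * e ^ 2) * (L * x ^ p) := by gcongr
      _ = L * x ^ p + c * e * x * (R * e) := by rw [hRx]; ring
  have hpower : a * e * y ^ α ≤ u * (R * e) :=
    calc a * e * y ^ α ≤ u * L ^ (1 - α) * e * y ^ α := by gcongr
      _ = u * (L ^ (1 - α) * y ^ α * e) := by ring
      _ ≤ u * (R * e) := by gcongr; exact rpow_one_sub_mul_rpow_le hp hpα hL hx.le hy hyL
  have hconst : b * e ^ 2 ≤ v * (R * e) :=
    calc b * e ^ 2 ≤ v * R * e ^ 2 := by gcongr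
      _ ≤ v * R * e := by gcongr; exact pow_le_of_le_one he0 he1 two_ne_zero
      _ = v * (R * e) := by ring
  calc (1 + c * e ^ 2) * y + a * e * y ^ α + b * e ^ 2
      ≤ L * x ^ p + (c * e * x + u + v) * (R * e) := by linarith
    _ ≤ L * x ^ p + p * (R * e) := by gcongr
    _ = L * (x ^ p + p * x ^ (p - 1) * e) := by rw [hR]; ring
    _ ≤ L * (x + e) ^ p := by
        gcongr; exact rpow_add_mul_rpow_sub_one_mul_le hp hx (by linarith)

theorem le_mul_add_sum_rpow_of_recursion {κ θ : ℝ} {f η : ℕ → ℝ} (hp : 1 ≤ p)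
    (hpα : p * (1 - α) = 1) (hc : 0 ≤ c) (hu : 0 ≤ u) (hv : 0 ≤ v) (hL : 0 < L) (hθ : 0 < θ)
    (hf : ∀ n, 0 ≤ f n) (hη : ∀ n, 1 ≤ n → η n ∈ Icc 0 1)
    (hκ : ∀ n, c * η (n + 1) * ∑ l ∈ Finset.Icc 1 n, η l ≤ κ)
    (hrec : ∀ n, f (n + 1) ≤
      (1 + c * η (n + 1) ^ 2) * f n + a * η (n + 1) * f n ^ α + b * η (n + 1) ^ 2)
    (hf0 : f 0 ≤ L * θ ^ p) (ha : a ≤ u * L ^ (1 - α)) (hb : b ≤ v * (L * θ ^ (p - 1)))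
    (hcuv : c * θ + κ + u + v ≤ p) (n : ℕ) :
    f n ≤ L * (θ + ∑ l ∈ Finset.Icc 1 n, η l) ^ p := by
  induction n with
  | zero => simpa using hf0
  | succ n ih =>
    have hη' := hη (n + 1) n.succ_pos
    have hS : 0 ≤ ∑ l ∈ Finset.Icc 1 n, η l := sum_Icc_one_nonneg (fun l hl => (hη l hl).1) n
    rw [Finset.sum_Icc_succ_top n.succ_pos, ← add_assoc]
    refine (hrec n).trans <|
      recursion_step_le_mul_add_rpow hp hpα hc hu hv hL (by positivity) (hf n) ih hη' ha ?_ ?_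
    · refine hb.trans ?_
      gcongr
      linarith
    · have hcθ : c * η (n + 1) * θ ≤ c * θ := by
        gcongr; exact mul_le_of_le_one_right hc hη'.2
      linarith [hκ n]

end Barrier

theorem exists_pos_le_mul_and_le_mul_rpow {β r s u : ℝ} (hβ : 0 < β) (hr : 0 < r) (hs : 0 < s)
    (hu : 0 < u) (a b c : ℝ) :
    ∃ K : ℝ, 0 < K ∧ a ≤ K * r ∧ b ≤ K * s ∧ c ≤ u * K ^ β :=
  ((eventually_gt_atTop 0).and <|
    ((tendsto_id.atTop_mul_const hr).eventually_ge_atTop a).and <|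
    ((tendsto_id.atTop_mul_const hs).eventually_ge_atTop b).and <|
    ((tendsto_rpow_atTop hβ).const_mul_atTop hu).eventually_ge_atTop c).exists

theorem exists_barrier_constants (A : ℝ) {C α p ε : ℝ} (hC : 0 ≤ C) (hp : 1 ≤ p)
    (hpα : p * (1 - α) = 1) (hε : 0 < ε) :
    ∃ K θ : ℝ, 0 < K ∧ 0 < θ ∧ C * A ^ 2 * θ ≤ ε ∧ ∀ d, 1 ≤ d → ∀ y, 0 ≤ y →
      y ≤ K * (d ^ p + y) * θ ^ p ∧
      A * √d ≤ ε * (K * (d ^ p + y)) ^ (1 - α) ∧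
      C * (A ^ 2 + d) ≤ ε * (K * (d ^ p + y) * θ ^ (p - 1)) := by
  have hα : 0 < 1 - α := pos_of_mul_pos_right (hpα ▸ one_pos) (by linarith)
  set θ := ε / (C * A ^ 2 + 1) with hθdef
  have hθ : 0 < θ := by positivity
  have hcθ : C * A ^ 2 * θ ≤ ε := by
    rw [hθdef, mul_div_assoc', div_le_iff₀ (by positivity)]; nlinarith
  obtain ⟨K, hK, hK_init, hK_const, hK_power⟩ :=
    exists_pos_le_mul_and_le_mul_rpow (s := ε * θ ^ (p - 1)) hα (Real.rpow_pos_of_pos hθ p)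
      (by positivity) hε 1 (C * (A ^ 2 + 1)) A
  refine ⟨K, θ, hK, hθ, hcθ, fun d hd y hy => ?_⟩
  have hdp : d ≤ d ^ p := Real.self_le_rpow_of_one_le hd hp
  set D := d ^ p + y
  have hdD : d ≤ D := by linarith
  have hdα : d ≤ D ^ (1 - α) :=
    le_rpow_add_rpow_one_sub (by linarith) hpα (by linarith) hy
  have hsqrt : √d ≤ d := Real.sqrt_le_self_iff.2 (Or.inr hd)
  refine ⟨?_, ?_, ?_⟩
  · calc y ≤ 1 * D := by linarith
      _ ≤ K * θ ^ p * D := by gcongr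
      _ = K * D * θ ^ p := by ring
  · calc A * √d ≤ ε * K ^ (1 - α) * D ^ (1 - α) :=
          mul_le_mul hK_power (hsqrt.trans hdα) (Real.sqrt_nonneg d) (by positivity)
      _ = ε * (K * D) ^ (1 - α) := by
          rw [Real.mul_rpow hK.le (by linarith), mul_assoc]
  · calc C * (A ^ 2 + d) ≤ C * (A ^ 2 + 1) * D := by
          rw [mul_assoc]; gcongr; nlinarith [sq_nonneg A, hdD]
      _ ≤ K * (ε * θ ^ (p - 1)) * D := by gcongr
      _ = ε * (K * D * θ ^ (p - 1)) := by ring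

theorem exists_bound_of_recursion (A : ℝ) {C α κ : ℝ} (hC : 0 ≤ C) (hα : α ∈ Ico 0 1)
    (hκ : κ < 1 / (1 - α)) :
    ∃ M : ℝ, 0 < M ∧ ∀ d, 1 ≤ d → ∀ f η : ℕ → ℝ, (∀ n, 0 ≤ f n) →
      (∀ n, 1 ≤ n → η n ∈ Icc 0 1) →
      (∀ n, C * A ^ 2 * η (n + 1) * ∑ l ∈ Finset.Icc 1 n, η l ≤ κ) →
      (∀ n, f (n + 1) ≤ (1 + C * A ^ 2 * η (n + 1) ^ 2) * f n +
        A * √d * η (n + 1) * f n ^ α + C * (A ^ 2 + d) * η (n + 1) ^ 2) →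
      ∀ n, f n ≤ M * (d ^ (1 / (1 - α)) + f 0) *
        max ((∑ l ∈ Finset.Icc 1 n, η l) ^ (1 / (1 - α))) 1 := by
  have hα' : 0 < 1 - α := sub_pos.2 hα.2
  have hpα : 1 / (1 - α) * (1 - α) = 1 := one_div_mul_cancel hα'.ne'
  have hp : 1 ≤ 1 / (1 - α) := (one_le_div hα').2 (by linarith [hα.1])
  set p := 1 / (1 - α)
  have hε : 0 < (p - κ) / 3 := by linarith
  obtain ⟨K, θ, hK, hθ, hcθ, hKθ⟩ := exists_barrier_constants A hC hp hpα hε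
  refine ⟨K * (θ + 1) ^ p, by positivity, fun d hd f η hf hη hstep hrec n => ?_⟩
  obtain ⟨hinit, hpower, hconst⟩ := hKθ d hd (f 0) (hf 0)
  have hD : 0 < d ^ p + f 0 := by linarith [hf 0, Real.self_le_rpow_of_one_le hd hp]
  have hS := sum_Icc_one_nonneg (fun l hl => (hη l hl).1) n
  calc f n ≤ K * (d ^ p + f 0) * (θ + ∑ l ∈ Finset.Icc 1 n, η l) ^ p :=
        le_mul_add_sum_rpow_of_recursion hp hpα (by positivity) hε.le hε.le (by positivity) hθ
          hf hη hstep hrec hinit hpower hconst (by linarith) n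
    _ ≤ K * (d ^ p + f 0) * ((θ + 1) ^ p * max ((∑ l ∈ Finset.Icc 1 n, η l) ^ p) 1) := by
        gcongr; exact add_rpow_le_mul_max_rpow_one (by linarith) hS hθ.le
    _ = K * (θ + 1) ^ p * (d ^ p + f 0) * max ((∑ l ∈ Finset.Icc 1 n, η l) ^ p) 1 := by ring

theorem mul_mul_sum_le_of_step_le {c r : ℝ} {η : ℕ → ℝ} (hc : 0 < c) (hr : 0 < r)
    (hη : ∀ n, 1 ≤ n → 0 < η n)
    (hstep : ∀ n, 1 ≤ n → η (n + 1) ≤ 1 / (r * c * ∑ l ∈ Finset.Icc 1 n, η l)) (n : ℕ) :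
    c * η (n + 1) * ∑ l ∈ Finset.Icc 1 n, η l ≤ 1 / r := by
  rcases n.eq_zero_or_pos with rfl | hn
  · simpa using hr.le
  · have hS : 0 < ∑ l ∈ Finset.Icc 1 n, η l :=
      Finset.sum_pos (fun l hl => hη l (Finset.mem_Icc.1 hl).1) ⟨1, Finset.mem_Icc.2 ⟨le_rfl, hn⟩⟩
    have h := hstep n hn
    rw [le_div_iff₀ (by positivity)] at h ⊢
    linarith

theorem statement_15_general (A C_V α : ℝ) (hA : A ≠ 0) (hCV : 0 < C_V)
    (hα : α ∈ Ico (0 : ℝ) (15 / 16)) :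
    ∃ M : ℝ, 0 < M ∧
      ∀ (d : ℝ), 1 ≤ d →
      ∀ (f η : ℕ → ℝ),
        (∀ n, 0 ≤ f n) →
        (∀ n, 1 ≤ n → η n ∈ Ioc (0 : ℝ) 1) →
        (∀ n : ℕ, 1 ≤ n →
          η (n + 1) ≤ 1 / (16 * (1 - α) ^ 2 * C_V * A ^ 2 * ∑ l ∈ Finset.Icc 1 n, η l)) →
        (∀ n : ℕ,
          f (n + 1) ≤ (1 + C_V * A ^ 2 * η (n + 1) ^ 2) * f n +
            A * √d * η (n + 1) * f n ^ α + C_V * (A ^ 2 + d) * η (n + 1) ^ 2) →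
        ∀ n : ℕ,
          f n ≤ M * (d ^ (1 / (1 - α)) + f 0) *
            max ((∑ l ∈ Finset.Icc 1 n, η l) ^ (1 / (1 - α))) 1 := by
  obtain ⟨hα0, hα1⟩ := hα
  have hα' : 0 < 1 - α := by linarith
  have hκ : 1 / (16 * (1 - α) ^ 2) < 1 / (1 - α) :=
    one_div_lt_one_div_of_lt hα' (by nlinarith)
  obtain ⟨M, hM, hbound⟩ := exists_bound_of_recursion A hCV.le ⟨hα0, by linarith⟩ hκ
  refine ⟨M, hM, fun d hd f η hf hη hstep hrec => ?_⟩
  refine hbound d hd f η hf (fun n hn => Ioc_subset_Icc_self (hη n hn)) ?_ hrec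
  refine mul_mul_sum_le_of_step_le (by positivity) (by positivity) (fun n hn => (hη n hn).1) ?_
  simpa only [mul_assoc] using hstep

/-- Real-sequence recursion: if `η_{n+1} ≤ 1/(16(1−α)²·C_V·A²·Σ_{l=1}^n η_l)`
and `f_{n+1} ≤ (1 + C_V A² η_{n+1}²) fₙ + A √d η_{n+1} fₙ^α + C_V (A² + d) η_{n+1}²`, then there
is a constant `M > 0` depending only on `A`, `C_V` and `α` such that for all `n ≥ 1`,
`fₙ ≤ M (d^{1/(1−α)} + f₀) max{(Σ_{l=1}^n η_l)^{1/(1−α)}, 1}`. -/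
theorem statement_15 (A C_V α : ℝ) (hA : 0 < A) (hCV : 0 < C_V)
    (hα : α ∈ Set.Icc (0 : ℝ) (1 / 2)) :
    ∃ M : ℝ, 0 < M ∧
      ∀ (d : ℝ), 1 ≤ d →
      ∀ (f η : ℕ → ℝ),
        (∀ n, 0 ≤ f n) →
        (∀ n, 1 ≤ n → η n ∈ Set.Ioc (0 : ℝ) 1) →
        (∀ n : ℕ, 1 ≤ n →
          η (n + 1) ≤ 1 / (16 * (1 - α) ^ 2 * C_V * A ^ 2 * ∑ l ∈ Finset.Icc 1 n, η l)) →
        (∀ n : ℕ,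
          f (n + 1) ≤ (1 + C_V * A ^ 2 * η (n + 1) ^ 2) * f n +
            A * Real.sqrt d * η (n + 1) * f n ^ α + C_V * (A ^ 2 + d) * η (n + 1) ^ 2) →
        ∀ n : ℕ, 1 ≤ n →
          f n ≤ M * (d ^ ((1 : ℝ) / (1 - α)) + f 0) *
            max ((∑ l ∈ Finset.Icc 1 n, η l) ^ ((1 : ℝ) / (1 - α))) 1 := by
  obtain ⟨M, hM, hbound⟩ :=
    statement_15_general A C_V α hA.ne' hCV ⟨hα.1, by linarith [hα.2]⟩
  exact ⟨M, hM, fun d hd f η hf hη hstep hrec n _ => hbound d hd f η hf hη hstep hrec n⟩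
end

section
/- For every α ∈ [0,1/2] and every x ∈ (0,1], one has (1+x)^{−1/(1−α)} + x/(8(1−α)²) ≤ 1. -/
/-!
Put `p = 1 / (1 - α) ∈ (0, 2]`. Convexity of `x ↦ (1 + x)⁻²` on `[0, 1]` bounds it by its chord
`1 - 3x/4`. Raising this to the power `p/2 ∈ [0, 1]`, Bernoulli's inequality gives
`(1 + x)⁻ᵖ ≤ 1 - 3px/8`, and `3px/8 ≥ p²x/8` because `p ≤ 3`.
-/

section ChordBounds

variable {p x : ℝ}

theorem inv_one_add_sq_le_one_sub_mul (hx₀ : 0 ≤ x) (hx₁ : x ≤ 1) :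
    ((1 + x) ^ 2)⁻¹ ≤ 1 - 3 / 4 * x := by
  have gap_nonneg : 0 ≤ x * (1 - x) * (5 + 3 * x) / 4 := by
    have := sub_nonneg.2 hx₁
    positivity
  rw [inv_le_iff_one_le_mul₀ (by positivity)]
  calc (1 : ℝ)
      ≤ 1 + x * (1 - x) * (5 + 3 * x) / 4 := le_add_of_nonneg_right gap_nonneg
    _ = (1 - 3 / 4 * x) * (1 + x) ^ 2 := by ring

theorem one_add_rpow_neg_le_one_sub_mul (hp₀ : 0 ≤ p) (hp₂ : p ≤ 2) (hx₀ : 0 ≤ x) (hx₁ : x ≤ 1) :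
    (1 + x) ^ (-p) ≤ 1 - 3 / 8 * p * x :=
  calc (1 + x) ^ (-p)
      = (((1 + x) ^ 2)⁻¹) ^ (p / 2) := by
        rw [Real.inv_rpow (by positivity), ← Real.rpow_natCast_mul (by positivity),
          ← Real.rpow_neg (by positivity)]
        congr 1
        push_cast
        ring
    _ ≤ (1 + -(3 / 4 * x)) ^ (p / 2) := by
        rw [← sub_eq_add_neg]
        gcongr
        exact inv_one_add_sq_le_one_sub_mul hx₀ hx₁
    _ ≤ 1 + p / 2 * -(3 / 4 * x) :=
        rpow_one_add_le_one_add_mul_self (by linarith) (by linarith) (by linarith)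
    _ = 1 - 3 / 8 * p * x := by ring

theorem one_add_rpow_neg_add_sq_mul_le_one (hp₀ : 0 ≤ p) (hp₂ : p ≤ 2) (hx₀ : 0 ≤ x)
    (hx₁ : x ≤ 1) : (1 + x) ^ (-p) + p ^ 2 * x / 8 ≤ 1 := by
  have chord := one_add_rpow_neg_le_one_sub_mul hp₀ hp₂ hx₀ hx₁
  have sq_le : p ^ 2 * x ≤ 3 * p * x := by
    rw [sq]
    gcongr
    linarith
  linarith

end ChordBounds

theorem statement_16_general (α x : ℝ) (hα : α ≤ 1 / 2) (hx : x ∈ Set.Icc (0 : ℝ) 1) :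
    (1 + x) ^ (-(1 / (1 - α))) + x / (8 * (1 - α) ^ 2) ≤ 1 := by
  have one_sub_pos : 0 < 1 - α := by linarith
  have exponent_le_two : 1 / (1 - α) ≤ 2 := by
    rw [div_le_iff₀ one_sub_pos]
    linarith
  calc (1 + x) ^ (-(1 / (1 - α))) + x / (8 * (1 - α) ^ 2)
      = (1 + x) ^ (-(1 / (1 - α))) + (1 / (1 - α)) ^ 2 * x / 8 := by
        congr 1
        field_simp
    _ ≤ 1 := one_add_rpow_neg_add_sq_mul_le_one (by positivity) exponent_le_two hx.1 hx.2

/-- For every `α ∈ [0,1/2]` and every `x ∈ (0,1]`,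
`(1+x)^{−1/(1−α)} + x/(8(1−α)²) ≤ 1`. -/
theorem statement_16 (α x : ℝ) (hα : α ∈ Set.Icc (0 : ℝ) (1 / 2))
    (hx : x ∈ Set.Ioc (0 : ℝ) 1) :
    (1 + x) ^ (-(1 / (1 - α))) + x / (8 * (1 - α) ^ 2) ≤ 1 :=
  statement_16_general α x hα.2 (Set.Ioc_subset_Icc_self hx)
end
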